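/- Suppose t = 1 and let p be an integer with 1 ≤ p ≤ s+1. If (f_M), indexed by the p-element subsets M of {1,…,s+1}, is a family of holomorphic functions f_M : D → ℂ satisfying f_M((a,b)·z) = (∏_{m∈M} σ_m(a)) · f_M(z) for all (a,b) ∈ Γ(K,U) and all z ∈ D, then every f_M is identically zero. (This is the q = 0 part of the Proposition that H^{0,q}(X(K,U), ∧^p Θ) = 0 for Oeljeklaus–Toma manifolds with t = 1: such a manifold admits no nonzero holomorphic p-vector field; in particular it has no nonzero holomorphic vector field and no nonzero holomorphic Poisson bivector.) -/

import Mathlib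

/-! A component `f` of a `p`-vector field is invariant under the translations by `𝓞 K` and
satisfies `f (a z) = χ(a) f z` for `a ∈ U`, where `χ(a) = ∏ m ∈ M, σ_m(a)`.

* `𝓞 K` is cocompact in `ℝˢ × ℂ` (`exists_integer_near`).  Hence, once `z₁, …, z_s` are fixed, the
  entire function `w ↦ f (z₁, …, z_s, w)` takes all its values on a compact set, and is constant
  by Liouville's theorem (`apply_update_last`).
* The projection of `𝓞 K` to `ℝˢ` is dense (`exists_integer_close`): Minkowski's theorem gives
  a nonzero `x ∈ 𝓞 K` that is small at all the real places, and `x 𝓞 K` is then an `ε`-net.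
  Together with the previous point, `f z` depends only on the imaginary parts of `z₁, …, z_s`
  (`apply_eq_of_im_eq`).
* A holomorphic function that does not depend on the real parts has zero derivative, so `f` is
  a constant `c` (`apply_eq_apply`), and `c = χ(a) c` for all `a ∈ U`.
* Because units have norm `±1`, `log |χ(a)|` is the value at `ℓ(a)` of a nonzero linear
  functional on `ℝˢ`.  As `ℓ(U)` spans `ℝˢ`, some `a` has `χ(a) ≠ 1` (`exists_unit_prod_ne_one`),
  whence `c = 0`.
-/

open NumberField

noncomputable section

variable (K : Type) [Field K] [NumberField K] (U : Subgroup (𝓞 K)ˣ)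
variable (s : ℕ) (σ : Fin (s + 2) → (K →+* ℂ))

/-- The logarithm map `ℓ : U → ℝˢ`, `ℓ(u) = (log σ₁(u), …, log σ_s(u))`. -/
def ell : ↥U → (Fin s → ℝ) := fun u i =>
  Real.log ((σ (Fin.castLE (by omega) i) (algebraMap (𝓞 K) K ((u : (𝓞 K)ˣ) : 𝓞 K))).re)

/-- The universal cover `D = Hˢ × ℂ ⊆ ℂ^{s+1}` of the Oeljeklaus–Toma manifold (`t = 1`). -/
def OTdomain : Set (Fin (s + 1) → ℂ) := {z | ∀ i : Fin (s + 1), (i : ℕ) < s → 0 < (z i).im}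

/-- The affine action of `(a, b) ∈ Γ(K,U) = U ⋉ 𝒪_K` on `D`:
`(a,b)·z = (σ₁(a)z₁+σ₁(b), …, σ_{s+1}(a)z_{s+1}+σ_{s+1}(b))`. -/
def OTact (a : (𝓞 K)ˣ) (b : 𝓞 K) (z : Fin (s + 1) → ℂ) : Fin (s + 1) → ℂ := fun i =>
  σ (Fin.castLE (by omega) i) (algebraMap (𝓞 K) K (a : 𝓞 K)) * z i +
    σ (Fin.castLE (by omega) i) (algebraMap (𝓞 K) K b)

/-! ### The ring of integers in `ℝˢ × ℂ` -/

lemma succ_lt_add_two (n : ℕ) : n + 1 < n + 2 := Nat.lt_succ_self _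

lemma lt_add_two (n : ℕ) : n < n + 2 := Nat.lt_add_of_pos_right Nat.two_pos

lemma succ_le_add_two (n : ℕ) : n + 1 ≤ n + 2 := Nat.le_succ _

lemma le_add_two (n : ℕ) : n ≤ n + 2 := Nat.le_add_right _ _

/-- `𝓞 K` is cocompact in `ℝˢ × ℂ`: every point is at bounded distance from an integer. -/
lemma exists_integer_near
    (hσinj : Function.Injective σ)
    (hreal : ∀ i : Fin (s + 2), (i : ℕ) < s → ∀ x : K, (σ i x).im = 0)
    (hconj : ∀ x : K, σ ⟨s + 1, succ_lt_add_two s⟩ x = (starRingEnd ℂ) (σ ⟨s, lt_add_two s⟩ x)) :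
    ∃ R : ℝ, 0 < R ∧ ∀ v : Fin (s + 1) → ℂ, (∀ i : Fin (s + 1), (i : ℕ) < s → (v i).im = 0) →
      ∃ b : 𝓞 K, ∀ i : Fin (s + 1),
        ‖v i - σ (Fin.castLE (succ_le_add_two s) i) (algebraMap (𝓞 K) K b)‖ ≤ R := by
  classical
  let e := RingOfIntegers.basis K
  let B := canonicalEmbedding.latticeBasis K
  have hB : ∀ k φ, B k φ = φ (algebraMap (𝓞 K) K (e k)) := by
    intro k φ
    rw [canonicalEmbedding.latticeBasis_apply, canonicalEmbedding.apply_at, integralBasis_apply]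
  refine ⟨1 + ∑ i : Fin (s + 1), ∑ k, ‖σ (Fin.castLE (succ_le_add_two s) i) (algebraMap (𝓞 K) K (e k))‖,
    by positivity, fun v hv => ?_⟩
  let w' : Fin (s + 2) → ℂ := fun i =>
    if h : (i : ℕ) < s + 1 then v ⟨i, h⟩ else (starRingEnd ℂ) (v (Fin.last s))
  let w : (K →+* ℂ) → ℂ := Function.extend σ w' 0
  let c := B.repr w
  have hc : ∀ i, w' i = ∑ k, c k * σ i (algebraMap (𝓞 K) K (e k)) := by
    intro i
    have h1 := congrFun (B.sum_repr w) (σ i)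
    simp only [Finset.sum_apply, Pi.smul_apply, smul_eq_mul, hB, w, hσinj.extend_apply] at h1
    exact h1.symm
  -- `v` is a real combination of the integral basis: replace each coefficient by its real part.
  have hre : ∀ i : Fin (s + 1), v i =
      ∑ k, ((c k).re : ℂ) * σ (Fin.castLE (succ_le_add_two s) i) (algebraMap (𝓞 K) K (e k)) := by
    intro i
    have h1 : v i = ∑ k, c k * σ (Fin.castLE (succ_le_add_two s) i) (algebraMap (𝓞 K) K (e k)) := by
      rw [← hc]; simp [w', Nat.lt_succ_iff.1 i.2]
    have h2 : v i = ∑ k, (starRingEnd ℂ) (c k) *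
        σ (Fin.castLE (succ_le_add_two s) i) (algebraMap (𝓞 K) K (e k)) := by
      by_cases hi : (i : ℕ) < s
      · have h3 := congrArg (starRingEnd ℂ) h1
        rw [Complex.conj_eq_iff_im.2 (hv i hi), map_sum] at h3
        rw [h3]
        refine Finset.sum_congr rfl fun k _ => ?_
        rw [map_mul, Complex.conj_eq_iff_im.2 (hreal (Fin.castLE (succ_le_add_two s) i) hi _)]
      · obtain rfl : i = Fin.last s := Fin.ext (by simp; omega)
        have h3 := congrArg (starRingEnd ℂ) (hc ⟨s + 1, succ_lt_add_two s⟩)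
        simp only [w', lt_irrefl, dite_false, map_sum, map_mul, hconj, Complex.conj_conj] at h3
        exact h3
    have h3 : v i = (v i + v i) / 2 := by ring
    rw [h3]
    nth_rewrite 1 [h1]
    rw [h2, ← Finset.sum_add_distrib, Finset.sum_div]
    refine Finset.sum_congr rfl fun k _ => ?_
    rw [← add_mul, Complex.add_conj]
    push_cast
    ring
  refine ⟨∑ k, round (c k).re • e k, fun i => ?_⟩
  have h1 : v i - σ (Fin.castLE (succ_le_add_two s) i) (algebraMap (𝓞 K) K (∑ k, round (c k).re • e k)) =
      ∑ k, (((c k).re - round (c k).re : ℝ) : ℂ) *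
        σ (Fin.castLE (succ_le_add_two s) i) (algebraMap (𝓞 K) K (e k)) := by
    rw [hre i, map_sum, map_sum, ← Finset.sum_sub_distrib]
    refine Finset.sum_congr rfl fun k _ => ?_
    rw [map_zsmul, map_zsmul, zsmul_eq_mul]
    push_cast
    ring
  rw [h1]
  calc _ ≤ ∑ k, ‖σ (Fin.castLE (succ_le_add_two s) i) (algebraMap (𝓞 K) K (e k))‖ := by
        refine norm_sum_le_of_le _ fun k _ => ?_
        rw [norm_mul, Complex.norm_real, Real.norm_eq_abs]
        have := abs_sub_round (c k).re
        exact mul_le_of_le_one_left (norm_nonneg _) (by linarith)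
    _ ≤ ∑ i : Fin (s + 1), ∑ k, ‖σ (Fin.castLE (succ_le_add_two s) i) (algebraMap (𝓞 K) K (e k))‖ :=
        Finset.single_le_sum
          (f := fun i : Fin (s + 1) =>
            ∑ k, ‖σ (Fin.castLE (succ_le_add_two s) i) (algebraMap (𝓞 K) K (e k))‖)
          (fun _ _ => by positivity) (Finset.mem_univ i)
    _ ≤ _ := by linarith

/-- Minkowski: some nonzero integer is arbitrarily small at all the real embeddings, at the
expense of being large at the complex one. -/
lemma exists_integer_small
    (hreal : ∀ i : Fin (s + 2), (i : ℕ) < s → ∀ x : K, (σ i x).im = 0)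
    (hnonreal : ∀ i : Fin (s + 2), s ≤ (i : ℕ) → ∃ x : K, (σ i x).im ≠ 0)
    (ε : ℝ) (hε : 0 < ε) :
    ∃ x : 𝓞 K, x ≠ 0 ∧ ∀ i : Fin (s + 2), (i : ℕ) < s →
      ‖σ i (algebraMap (𝓞 K) K x)‖ ≤ ε := by
  classical
  let w₀ : InfinitePlace K := InfinitePlace.mk (σ ⟨s, lt_add_two s⟩)
  obtain ⟨C, hC⟩ := ENNReal.lt_iff_exists_nnreal_btwn.1
    (mixedEmbedding.minkowskiBound_lt_top K (1 : (FractionalIdeal (nonZeroDivisors (𝓞 K)) K)ˣ))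
  obtain ⟨g, hg, hgC⟩ := mixedEmbedding.adjust_f K (f := fun _ => ⟨ε, hε.le⟩) (w₁ := w₀) C
    (fun _ _ h => hε.ne' (congrArg NNReal.toReal h))
  have hvol : mixedEmbedding.minkowskiBound K ↑1 <
      MeasureTheory.volume (mixedEmbedding.convexBodyLT K g) := by
    rw [mixedEmbedding.convexBodyLT_volume]
    refine hC.1.trans_le ?_
    rw [← ENNReal.coe_mul, ENNReal.coe_le_coe]
    have := mixedEmbedding.one_le_convexBodyLTFactor K
    rw [hgC]
    exact le_mul_of_one_le_left zero_le this
  obtain ⟨x, hx, hlt⟩ := mixedEmbedding.exists_ne_zero_mem_ringOfIntegers_lt K hvol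
  refine ⟨x, hx, fun i hi => ?_⟩
  have hne : InfinitePlace.mk (σ i) ≠ w₀ := by
    intro h
    obtain ⟨y, hy⟩ := hnonreal ⟨s, lt_add_two s⟩ le_rfl
    apply hy
    rcases InfinitePlace.mk_eq_iff.1 h with h | h
    · rw [← h, hreal i hi]
    · rw [← h, ComplexEmbedding.conjugate_coe_eq, Complex.conj_im, hreal i hi, neg_zero]
  have h1 := hlt (InfinitePlace.mk (σ i))
  rw [hg _ hne, InfinitePlace.apply] at h1
  exact h1.le

/-- The projection of `𝓞 K` to `ℝˢ` is dense. -/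
lemma exists_integer_close
    (hσinj : Function.Injective σ)
    (hreal : ∀ i : Fin (s + 2), (i : ℕ) < s → ∀ x : K, (σ i x).im = 0)
    (hnonreal : ∀ i : Fin (s + 2), s ≤ (i : ℕ) → ∃ x : K, (σ i x).im ≠ 0)
    (hconj : ∀ x : K, σ ⟨s + 1, succ_lt_add_two s⟩ x = (starRingEnd ℂ) (σ ⟨s, lt_add_two s⟩ x))
    (v : Fin (s + 1) → ℂ) (hv : ∀ i : Fin (s + 1), (i : ℕ) < s → (v i).im = 0)
    (ε : ℝ) (hε : 0 < ε) :
    ∃ b : 𝓞 K, ∀ i : Fin (s + 1), (i : ℕ) < s →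
        ‖v i - σ (Fin.castLE (succ_le_add_two s) i) (algebraMap (𝓞 K) K b)‖ ≤ ε := by
  obtain ⟨R, hR, hnear⟩ := exists_integer_near K s σ hσinj hreal hconj
  obtain ⟨x, hx0, hx⟩ := exists_integer_small K s σ hreal hnonreal (ε / R) (by positivity)
  obtain ⟨b, hb⟩ := hnear
    (fun i => v i / σ (Fin.castLE (succ_le_add_two s) i) (algebraMap (𝓞 K) K x)) (by
      intro i hi
      have h1 := hreal (Fin.castLE (succ_le_add_two s) i) hi (algebraMap (𝓞 K) K x)
      simp [Complex.div_im, hv i hi, h1])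
  refine ⟨x * b, fun i hi => ?_⟩
  have hne : σ (Fin.castLE (succ_le_add_two s) i) (algebraMap (𝓞 K) K x) ≠ 0 := by
    simpa using hx0
  have h1 : v i - σ (Fin.castLE (succ_le_add_two s) i) (algebraMap (𝓞 K) K (x * b)) =
      σ (Fin.castLE (succ_le_add_two s) i) (algebraMap (𝓞 K) K x) *
        (v i / σ (Fin.castLE (succ_le_add_two s) i) (algebraMap (𝓞 K) K x) -
          σ (Fin.castLE (succ_le_add_two s) i) (algebraMap (𝓞 K) K b)) := by
    rw [mul_sub, mul_div_cancel₀ _ hne, map_mul, map_mul]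
  rw [h1, norm_mul]
  calc _ ≤ ε / R * R := mul_le_mul (hx (Fin.castLE (succ_le_add_two s) i) hi) (hb i) (norm_nonneg _)
        (by positivity)
    _ = ε := by field_simp

/-! ### Units -/

/-- A unit has norm `±1`: the logarithms of its absolute values at all the embeddings add up
to zero, the complex pair counting twice. -/
lemma sum_log_unit
    (hdeg : Module.finrank ℚ K = s + 2)
    (hσinj : Function.Injective σ)
    (hconj : ∀ x : K, σ ⟨s + 1, succ_lt_add_two s⟩ x = (starRingEnd ℂ) (σ ⟨s, lt_add_two s⟩ x))
    (u : (𝓞 K)ˣ) :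
    ∑ i : Fin s, Real.log ‖σ (Fin.castLE (le_add_two s) i) (algebraMap (𝓞 K) K u)‖ +
      2 * Real.log ‖σ ⟨s, lt_add_two s⟩ (algebraMap (𝓞 K) K u)‖ = 0 := by
  have hbij : Function.Bijective σ :=
    (Fintype.bijective_iff_injective_and_card σ).2
      ⟨hσinj, by rw [Embeddings.card, hdeg, Fintype.card_fin]⟩
  have hne : ∀ i, ‖σ i (algebraMap (𝓞 K) K u)‖ ≠ 0 := by
    intro i; simp
  have h0 : ‖(algebraMap ℚ ℂ) (Algebra.norm ℚ (algebraMap (𝓞 K) K u))‖ = 1 := by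
    have h1 := NumberField.isUnit_iff_norm.1 u.isUnit
    rw [RingOfIntegers.coe_norm] at h1
    rw [eq_ratCast, Complex.norm_ratCast]
    exact_mod_cast h1
  have h1 : ∏ i, ‖σ i (algebraMap (𝓞 K) K u)‖ = 1 := by
    rw [Algebra.norm_eq_prod_embeddings ℚ ℂ, norm_prod] at h0
    rw [← h0, ← Fintype.prod_equiv (RingHom.equivRatAlgHom K ℂ)
      (fun φ => ‖φ (algebraMap (𝓞 K) K u)‖) _ fun _ => by simp [RingHom.equivRatAlgHom_apply]]
    exact hbij.prod_comp (fun φ : K →+* ℂ => ‖φ (algebraMap (𝓞 K) K u)‖)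
  have h2 := congrArg Real.log h1
  rw [Real.log_one, Real.log_prod fun i _ => hne i, Fin.sum_univ_castSucc,
    Fin.sum_univ_castSucc] at h2
  have h3 : ‖σ (Fin.last (s + 1)) (algebraMap (𝓞 K) K u)‖ =
      ‖σ ⟨s, lt_add_two s⟩ (algebraMap (𝓞 K) K u)‖ := by
    have := hconj (algebraMap (𝓞 K) K u)
    rw [show Fin.last (s + 1) = ⟨s + 1, succ_lt_add_two s⟩ from rfl, this, Complex.norm_conj]
  rw [h3] at h2
  rw [← h2, two_mul, ← add_assoc]
  rfl

/-- The character `a ↦ ∏ m ∈ M, σ_m(a)` of `U` is nontrivial for every nonempty `M`. -/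
lemma exists_unit_prod_ne_one
    (hs : 0 < s)
    (hdeg : Module.finrank ℚ K = s + 2)
    (hσinj : Function.Injective σ)
    (hreal : ∀ i : Fin (s + 2), (i : ℕ) < s → ∀ x : K, (σ i x).im = 0)
    (hconj : ∀ x : K, σ ⟨s + 1, succ_lt_add_two s⟩ x = (starRingEnd ℂ) (σ ⟨s, lt_add_two s⟩ x))
    (hspan : Submodule.span ℝ (Set.range (ell K U s σ)) = ⊤)
    (M : Finset (Fin (s + 1))) (hM : M.Nonempty) :
    ∃ a : ↥U, ∏ m ∈ M,
      σ (Fin.castLE (succ_le_add_two s) m) (algebraMap (𝓞 K) K ((a : (𝓞 K)ˣ) : 𝓞 K)) ≠ 1 := by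
  classical
  by_contra! hall
  -- The functional `ℓ(a) ↦ log |χ(a)|`; the complex place contributes `-1/2` of the sum.
  let ε : Fin s → ℝ := fun i =>
    (if i.castSucc ∈ M then 1 else 0) - (if Fin.last s ∈ M then 1 / 2 else 0)
  have hε : ∃ i, ε i ≠ 0 := by
    by_cases hl : Fin.last s ∈ M
    · refine ⟨⟨0, hs⟩, ?_⟩
      simp only [ε, hl, if_true]
      split_ifs <;> norm_num
    · obtain ⟨m, hm⟩ := hM
      obtain ⟨i, rfl⟩ | rfl := m.eq_castSucc_or_eq_last
      · exact ⟨i, by simp [ε, hl, hm]⟩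
      · exact absurd hm hl
  let L : (Fin s → ℝ) →ₗ[ℝ] ℝ := ∑ i, ε i • LinearMap.proj i
  have hL : ∀ v, L v = ∑ i, ε i * v i := by intro v; simp [L]
  have hL0 : ∀ a : ↥U, L (ell K U s σ a) = 0 := by
    intro a
    let l : Fin (s + 1) → ℝ := fun m =>
      Real.log ‖σ (Fin.castLE (succ_le_add_two s) m) (algebraMap (𝓞 K) K ((a : (𝓞 K)ˣ) : 𝓞 K))‖
    have hl : ∀ i : Fin s, ell K U s σ a i = l i.castSucc := by
      intro i
      have h1 := hreal (Fin.castLE (le_add_two s) i) i.2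
        (algebraMap (𝓞 K) K ((a : (𝓞 K)ˣ) : 𝓞 K))
      have h2 : ‖σ (Fin.castLE (le_add_two s) i)
          (algebraMap (𝓞 K) K ((a : (𝓞 K)ˣ) : 𝓞 K))‖ =
          |(σ (Fin.castLE (le_add_two s) i) (algebraMap (𝓞 K) K ((a : (𝓞 K)ˣ) : 𝓞 K))).re| :=
        (Complex.abs_re_eq_norm.2 h1).symm
      change Real.log _ = Real.log ‖σ (Fin.castLE (le_add_two s) i) _‖
      rw [h2, Real.log_abs]
    have hsum : ∑ i : Fin s, l i.castSucc + 2 * l (Fin.last s) = 0 :=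
      sum_log_unit K s σ hdeg hσinj hconj a
    have hprod : ∑ m ∈ M, l m = 0 := by
      have h1 := congrArg (fun z : ℂ => Real.log ‖z‖) (hall a)
      simp only [norm_one, Real.log_one, norm_prod] at h1
      rwa [Real.log_prod fun m _ => by simp] at h1
    rw [← Finset.univ_inter M, ← Finset.sum_ite_mem, Fin.sum_univ_castSucc] at hprod
    rw [hL]
    simp only [ε, hl, sub_mul, Finset.sum_sub_distrib, ite_mul, one_mul, zero_mul]
    split_ifs at hprod ⊢
    · rw [← Finset.mul_sum]
      linarith
    · rw [Finset.sum_const_zero]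
      linarith
  have hker : L = 0 := by
    refine LinearMap.ext_on hspan ?_
    rintro _ ⟨a, rfl⟩
    simpa using hL0 a
  obtain ⟨i, hi⟩ := hε
  apply hi
  have := hL (Pi.single i 1)
  rw [hker] at this
  simpa [Pi.single_apply] using this.symm

/-! ### Holomorphic functions on `D` invariant under `𝓞 K` -/

lemma isOpen_OTdomain : IsOpen (OTdomain s) := by
  simp only [OTdomain, Set.ofPred_forall]
  refine isOpen_iInter_of_finite fun i => isOpen_iInter_of_finite fun _ => ?_
  exact isOpen_lt continuous_const (Complex.continuous_im.comp (continuous_apply i))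

lemma convex_OTdomain : Convex ℝ (OTdomain s) := by
  intro x hx y hy a b ha hb hab i hi
  have h1 := hx i hi
  have h2 := hy i hi
  simp only [Pi.add_apply, Pi.smul_apply, Complex.add_im, Complex.smul_im, smul_eq_mul]
  rcases ha.eq_or_lt with rfl | ha
  · have : b = 1 := by linarith
    simp [this, h2]
  · have := mul_pos ha h1
    have := mul_nonneg hb h2.le
    linarith

lemma mem_OTdomain_of_im_eq {y z : Fin (s + 1) → ℂ} (hz : z ∈ OTdomain s)
    (h : ∀ i : Fin (s + 1), (i : ℕ) < s → (y i).im = (z i).im) : y ∈ OTdomain s :=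
  fun i hi => (h i hi).symm ▸ hz i hi

/-- By Liouville's theorem, an invariant holomorphic function does not depend on the last
coordinate. -/
lemma apply_update_last
    (hσinj : Function.Injective σ)
    (hreal : ∀ i : Fin (s + 2), (i : ℕ) < s → ∀ x : K, (σ i x).im = 0)
    (hconj : ∀ x : K, σ ⟨s + 1, succ_lt_add_two s⟩ x = (starRingEnd ℂ) (σ ⟨s, lt_add_two s⟩ x))
    (f : (Fin (s + 1) → ℂ) → ℂ) (hf : DifferentiableOn ℂ f (OTdomain s))
    (hinv : ∀ b : 𝓞 K, ∀ z ∈ OTdomain s, f (OTact K s σ 1 b z) = f z)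
    (z : Fin (s + 1) → ℂ) (hz : z ∈ OTdomain s) (w : ℂ) :
    f (Function.update z (Fin.last s) w) = f z := by
  obtain ⟨R, hR, hnear⟩ := exists_integer_near K s σ hσinj hreal hconj
  have hup : ∀ w, ∀ i : Fin (s + 1), (i : ℕ) < s →
      Function.update z (Fin.last s) w i = z i := by
    intro w i hi
    exact Function.update_of_ne (fun h => by simp [h] at hi) _ _
  have hupD : ∀ w, Function.update z (Fin.last s) w ∈ OTdomain s := fun w =>
    mem_OTdomain_of_im_eq s hz fun i hi => by rw [hup w i hi]
  -- The compact set of points with the imaginary parts of `z` and bounded remaining coordinates.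
  let c : Fin (s + 1) → ℂ := fun i => if (i : ℕ) < s then (z i).im * Complex.I else 0
  let C : Set (Fin (s + 1) → ℂ) := Set.univ.pi fun i =>
    Metric.closedBall (c i) R ∩ {y | (i : ℕ) < s → y.im = (z i).im}
  have hC : IsCompact C := by
    refine isCompact_univ_pi fun i => (isCompact_closedBall _ _).inter_right ?_
    by_cases hi : (i : ℕ) < s
    · simpa [hi] using isClosed_eq Complex.continuous_im continuous_const
    · simp [hi]
  have hCD : C ⊆ OTdomain s := fun y hy =>
    mem_OTdomain_of_im_eq s hz fun i hi => (hy i trivial).2 hi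
  obtain ⟨B, hB⟩ := hC.exists_bound_of_continuousOn (hf.continuousOn.mono hCD)
  let g : ℂ → ℂ := fun w => f (Function.update z (Fin.last s) w)
  have hg : Differentiable ℂ g := by
    intro w
    have h1 : DifferentiableAt ℂ f (Function.update z (Fin.last s) w) :=
      hf.differentiableAt ((isOpen_OTdomain s).mem_nhds (hupD w))
    exact h1.comp w (hasFDerivAt_update z w).differentiableAt
  have hbd : Bornology.IsBounded (Set.range g) := by
    refine isBounded_iff_forall_norm_le.2 ⟨B, ?_⟩
    rintro _ ⟨w, rfl⟩
    let y := Function.update z (Fin.last s) w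
    obtain ⟨b, hb⟩ := hnear (fun i => c i - y i) (by
      intro i hi
      simp [c, y, hi, hup w i hi])
    have h1 : g w = f (OTact K s σ 1 b y) := (hinv b y (hupD w)).symm
    rw [h1]
    refine hB _ fun i _ => ⟨?_, fun hi => ?_⟩
    · have h2 := hb i
      rw [Metric.mem_closedBall, dist_comm, dist_eq_norm]
      simpa [OTact, sub_sub] using h2
    · have h3 := hreal (Fin.castLE (succ_le_add_two s) i) hi (algebraMap (𝓞 K) K b)
      simp [OTact, y, hup w i hi, h3]
  have := hg.apply_eq_apply_of_bounded hbd w (z (Fin.last s))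
  simpa [g] using this

/-- An invariant holomorphic function depends only on the imaginary parts of the first `s`
coordinates, because the projection of `𝓞 K` to `ℝˢ` is dense. -/
lemma apply_eq_of_im_eq
    (hσinj : Function.Injective σ)
    (hreal : ∀ i : Fin (s + 2), (i : ℕ) < s → ∀ x : K, (σ i x).im = 0)
    (hnonreal : ∀ i : Fin (s + 2), s ≤ (i : ℕ) → ∃ x : K, (σ i x).im ≠ 0)
    (hconj : ∀ x : K, σ ⟨s + 1, succ_lt_add_two s⟩ x = (starRingEnd ℂ) (σ ⟨s, lt_add_two s⟩ x))
    (f : (Fin (s + 1) → ℂ) → ℂ) (hf : DifferentiableOn ℂ f (OTdomain s))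
    (hinv : ∀ b : 𝓞 K, ∀ z ∈ OTdomain s, f (OTact K s σ 1 b z) = f z)
    (y z : Fin (s + 1) → ℂ) (hz : z ∈ OTdomain s)
    (hyz : ∀ i : Fin (s + 1), (i : ℕ) < s → (y i).im = (z i).im) : f y = f z := by
  have hy := mem_OTdomain_of_im_eq s hz hyz
  have hcont : ContinuousAt f z :=
    (hf.continuousOn).continuousAt ((isOpen_OTdomain s).mem_nhds hz)
  refine eq_of_forall_dist_le fun ε hε => ?_
  obtain ⟨δ, hδ, hball⟩ := Metric.continuousAt_iff.1 hcont ε hε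
  obtain ⟨b, hb⟩ := exists_integer_close K s σ hσinj hreal hnonreal hconj (fun i => z i - y i)
    (fun i hi => by simp [hyz i hi]) (δ / 2) (by positivity)
  let y' := OTact K s σ 1 b y
  have hy' : y' ∈ OTdomain s := mem_OTdomain_of_im_eq s hz fun i hi => by
    have h3 := hreal (Fin.castLE (succ_le_add_two s) i) hi (algebraMap (𝓞 K) K b)
    simp [y', OTact, h3, hyz i hi]
  rw [← hinv b y hy, ← apply_update_last K s σ hσinj hreal hconj f hf hinv y' hy' (z (Fin.last s))]
  refine (hball ?_).le
  refine lt_of_le_of_lt ((dist_pi_le_iff (by positivity)).2 fun i => ?_) (half_lt_self hδ)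
  by_cases hi : (i : ℕ) < s
  · rw [Function.update_of_ne (fun h => by simp [h] at hi), dist_comm, dist_eq_norm]
    simpa [y', OTact, sub_sub] using hb i hi
  · obtain rfl : i = Fin.last s := Fin.ext (by simp; omega)
    rw [Function.update_self, dist_self]
    positivity

/-- A holomorphic function on `D` invariant under `𝓞 K` is constant: its complex-linear
derivative kills all real vectors. -/
lemma apply_eq_apply
    (hσinj : Function.Injective σ)
    (hreal : ∀ i : Fin (s + 2), (i : ℕ) < s → ∀ x : K, (σ i x).im = 0)
    (hnonreal : ∀ i : Fin (s + 2), s ≤ (i : ℕ) → ∃ x : K, (σ i x).im ≠ 0)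
    (hconj : ∀ x : K, σ ⟨s + 1, succ_lt_add_two s⟩ x = (starRingEnd ℂ) (σ ⟨s, lt_add_two s⟩ x))
    (f : (Fin (s + 1) → ℂ) → ℂ) (hf : DifferentiableOn ℂ f (OTdomain s))
    (hinv : ∀ b : 𝓞 K, ∀ z ∈ OTdomain s, f (OTact K s σ 1 b z) = f z)
    (y z : Fin (s + 1) → ℂ) (hy : y ∈ OTdomain s) (hz : z ∈ OTdomain s) : f y = f z := by
  refine (isOpen_OTdomain s).is_const_of_fderiv_eq_zero (convex_OTdomain s).isPreconnected hf
    (fun x hx => ?_) hy hz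
  have hd : HasFDerivAt f (fderiv ℂ f x) x :=
    (hf.differentiableAt ((isOpen_OTdomain s).mem_nhds hx)).hasFDerivAt
  have hkill : ∀ v : Fin (s + 1) → ℝ, fderiv ℂ f x (fun i => (v i : ℂ)) = 0 := by
    intro v
    have h1 : HasDerivAt (fun t : ℝ => x + t • (fun i => (v i : ℂ))) (fun i => (v i : ℂ)) 0 := by
      simpa using ((hasDerivAt_id (0 : ℝ)).smul_const (fun i => (v i : ℂ))).const_add x
    have h2 : HasDerivAt (fun t : ℝ => f (x + t • (fun i => (v i : ℂ))))
        (fderiv ℂ f x (fun i => (v i : ℂ))) 0 := by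
      have h3 := hd.restrictScalars ℝ
      exact HasFDerivAt.comp_hasDerivAt_of_eq (0 : ℝ) h3 h1 (by simp)
    have h4 : (fun t : ℝ => f (x + t • (fun i => (v i : ℂ)))) = fun _ => f x := by
      funext t
      exact apply_eq_of_im_eq K s σ hσinj hreal hnonreal hconj f hf hinv _ _ hx
        fun i _ => by simp
    rw [h4] at h2
    exact h2.unique (hasDerivAt_const _ _)
  ext v
  have hv : v = (fun i => ((v i).re : ℂ)) + Complex.I • (fun i => ((v i).im : ℂ)) := by
    funext i
    simp only [Pi.add_apply, Pi.smul_apply, smul_eq_mul]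
    rw [mul_comm, Complex.re_add_im]
  rw [hv, map_add, map_smul, hkill, hkill]
  simp

/-! ### Vanishing of multivector fields -/

/--
`H^{p,0}(X(K,U), ∧^p Θ) = 0` for `t = 1` and `1 ≤ p ≤ s+1`: an Oeljeklaus–Toma manifold with
`t = 1` admits no nonzero holomorphic `p`-vector field. Formalized on the universal cover: if
`(f_M)`, indexed by the `p`-element subsets `M` of `{1,…,s+1}`, is a family of holomorphic
functions on `D` with `f_M((a,b)·z) = (∏_{m∈M} σ_m(a)) · f_M(z)`, then every `f_M` vanishes
identically. -/
theorem OT_t_eq_one_no_holomorphic_multivector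
    (hs : 0 < s)
    (hdeg : Module.finrank ℚ K = s + 2)
    (hσinj : Function.Injective σ)
    (hreal : ∀ i : Fin (s + 2), (i : ℕ) < s → ∀ x : K, (σ i x).im = 0)
    (hnonreal : ∀ i : Fin (s + 2), s ≤ (i : ℕ) → ∃ x : K, (σ i x).im ≠ 0)
    (hconj : ∀ x : K, σ ⟨s + 1, by omega⟩ x = (starRingEnd ℂ) (σ ⟨s, by omega⟩ x))
    (hUpos : ∀ u ∈ U, ∀ i : Fin (s + 2), (i : ℕ) < s →
      0 < (σ i (algebraMap (𝓞 K) K (u : (𝓞 K)ˣ))).re)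
    (hellinj : Function.Injective (ell K U s σ))
    (hdisc : DiscreteTopology (AddSubgroup.closure (Set.range (ell K U s σ))))
    (hspan : Submodule.span ℝ (Set.range (ell K U s σ)) = ⊤)
    (p : ℕ) (hp : 1 ≤ p) (hp' : p ≤ s + 1)
    (f : {M : Finset (Fin (s + 1)) // M.card = p} → ((Fin (s + 1) → ℂ) → ℂ))
    (hf : ∀ M, DifferentiableOn ℂ (f M) (OTdomain s))
    (heq : ∀ M, ∀ (a : ↥U) (b : 𝓞 K), ∀ z ∈ OTdomain s,
      f M (OTact K s σ (a : (𝓞 K)ˣ) b z) =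
        (∏ m ∈ M.1,
          σ (Fin.castLE (by omega) m) (algebraMap (𝓞 K) K ((a : (𝓞 K)ˣ) : 𝓞 K))) * f M z) :
    ∀ M, ∀ z ∈ OTdomain s, f M z = 0 := by
  intro M z hz
  have hinv : ∀ b : 𝓞 K, ∀ z ∈ OTdomain s, f M (OTact K s σ 1 b z) = f M z := by
    intro b z hz
    simpa using heq M 1 b z hz
  obtain ⟨a, ha⟩ := exists_unit_prod_ne_one K U s σ hs hdeg hσinj hreal hconj hspan M.1
    (Finset.card_pos.1 (by rw [M.2]; omega))
  have hmem : OTact K s σ (a : (𝓞 K)ˣ) 0 z ∈ OTdomain s := by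
    intro i hi
    have h1 := hreal (Fin.castLE (by omega) i) hi (algebraMap (𝓞 K) K ((a : (𝓞 K)ˣ) : 𝓞 K))
    have h2 := mul_pos (hUpos a a.2 (Fin.castLE (by omega) i) hi) (hz i hi)
    simpa [OTact, h1] using h2
  have h1 := heq M a 0 z hz
  rw [apply_eq_apply K s σ hσinj hreal hnonreal hconj (f M) (hf M) hinv _ z hmem hz] at h1
  by_contra h0
  exact ha (mul_right_cancel₀ h0 (h1.symm.trans (one_mul _).symm))

end
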